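/- arXiv:1412.8525 — 2 statements merged into one kernel-verified Lean document; each statement's English description precedes it below -/
import Mathlib

section
/- Fix n : ℕ and let SA n denote the set of self-adjoint ℂ-linear endomorphisms of EuclideanSpace ℂ (Fin n). For p ∈ [0,1], r : ℝ, and A ∈ SA n, define the lifting Λ^{p,r,A} for the functor Q n : X ↦ (SA n → D (ℝ × X)) by Λ^{p,r,A} X U = { g : SA n → D (ℝ × X) | ∑ over those pairs (r, u) in (g A).support with u ∈ U of (g A) (r, u) = p }. The family (Λ^{p,r,A})_{p ∈ [0,1], r ∈ ℝ, A ∈ SA n} is separating for Q n: for every type X and all g, g' ∈ Q n X with g ≠ g', there exist p, r, A and U : Set X such that exactly one of g and g' belongs to Λ^{p,r,A} X U. -/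
open CategoryTheory
open scoped NNReal Classical

universe u v

/-- The finite distribution functor `D : Type u ⥤ Type u`. -/
noncomputable def DistFunctor : Type u ⥤ Type u where
  obj X := { d : X →₀ ℝ≥0 // ∑ x ∈ d.support, d x = 1 }
  map f := ↾fun d => ⟨Finsupp.mapDomain f d.1, by
    have h : (Finsupp.mapDomain f d.1).sum (fun _ v => v) = d.1.sum (fun _ v => v) :=
      Finsupp.sum_mapDomain_index (fun _ => rfl) (fun _ _ _ => rfl)
    simpa [Finsupp.sum] using h.trans (by simpa [Finsupp.sum] using d.2)⟩
  map_id X := by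
    refine ConcreteCategory.hom_ext _ _ fun d => ?_
    exact Subtype.ext (by simp [CategoryTheory.types_id, Finsupp.mapDomain_id])
  map_comp f g := by
    refine ConcreteCategory.hom_ext _ _ fun d => ?_
    exact Subtype.ext (by simp [CategoryTheory.types_comp, Finsupp.mapDomain_comp])

/-- The functor `X ↦ D (ℝ × X)`. -/
noncomputable def DRFunctor : Type u ⥤ Type u where
  obj X := DistFunctor.obj (ℝ × X)
  map {X Y} f := DistFunctor.map (↾(Prod.map id f : ℝ × X → ℝ × Y))
  map_id X := DistFunctor.map_id (ℝ × X)
  map_comp {X Y Z} f g :=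
    DistFunctor.map_comp (↾(Prod.map id f : ℝ × X → ℝ × Y)) (↾(Prod.map id g : ℝ × Y → ℝ × Z))

/-- The self-adjoint `ℂ`-linear endomorphisms of `EuclideanSpace ℂ (Fin n)`. -/
def SA (n : ℕ) : Type :=
  { A : EuclideanSpace ℂ (Fin n) →ₗ[ℂ] EuclideanSpace ℂ (Fin n) // IsSelfAdjoint A }

/-- The distribution based quantum signature functor `Q n : X ↦ (SA n → D (ℝ × X))`. -/
noncomputable def QFunctor (n : ℕ) : Type u ⥤ Type u where
  obj X := SA n → DRFunctor.obj X
  map f := ↾fun g A => DRFunctor.map f (g A)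
  map_id X := by refine ConcreteCategory.hom_ext _ _ fun g => ?_; funext A; simp
  map_comp f g := by refine ConcreteCategory.hom_ext _ _ fun h => ?_; funext A; simp

/-- `Λ^{p,r,A}`: the lifting for `Q n` given by the mass that `g A` puts on pairs `(r, u)`
with `u ∈ U`. -/
noncomputable def qLifting (n : ℕ) (p : ℝ≥0) (r : ℝ) (A : SA n)
    (X : Type u) (U : Set X) : Set ((QFunctor n).obj X) :=
  { g | ∑ z ∈ (g A).1.support.filter (fun z => z.1 = r ∧ z.2 ∈ U), (g A).1 z = p }

theorem DistFunctor.apply_le_one {X : Type u} (d : DistFunctor.obj X) (x : X) : d.1 x ≤ 1 :=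
  (Finsupp.le_degree x d.1).trans_eq d.2

theorem QFunctor.ne_iff {n : ℕ} {X : Type u} {g g' : (QFunctor n).obj X} :
    g ≠ g' ↔ ∃ (A : SA n) (z : ℝ × X), (g A).1 z ≠ (g' A).1 z :=
  Function.ne_iff.trans <| exists_congr fun _ => Subtype.ext_iff.not.trans Finsupp.ne_iff

theorem sum_support_filter_fst_eq_and_snd_mem_singleton {α β M : Type*} [AddCommMonoid M]
    (f : α × β →₀ M) (a : α) (b : β) :
    ∑ z ∈ f.support with z.1 = a ∧ z.2 ∈ ({b} : Set β), f z = f (a, b) := by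
  simp only [Set.mem_singleton_iff, ← Prod.mk_inj, Finset.sum_filter]
  exact Finsupp.sum_ite_self_eq' f (a, b)

theorem mem_qLifting_singleton_iff {n : ℕ} {p : ℝ≥0} {r : ℝ} {A : SA n} {X : Type u} {x : X}
    {g : (QFunctor n).obj X} : g ∈ qLifting n p r A X {x} ↔ (g A).1 (r, x) = p :=
  Eq.congr_left (sum_support_filter_fst_eq_and_snd_mem_singleton (g A).1 r x)

/-- The family `(Λ^{p,r,A})_{p ∈ [0,1], r ∈ ℝ, A ∈ SA n}` is separating for `Q n`. -/
theorem qLifting_isSeparating (n : ℕ) (X : Type u)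
    (g g' : (QFunctor n).obj X) (h : g ≠ g') :
    ∃ (p : ℝ≥0), p ∈ Set.Icc (0 : ℝ≥0) 1 ∧
      ∃ (r : ℝ) (A : SA n) (U : Set X),
        Xor' (g ∈ qLifting n p r A X U) (g' ∈ qLifting n p r A X U) := by
  obtain ⟨A, ⟨r, x⟩, hne⟩ := QFunctor.ne_iff.mp h
  have hp : (g A).1 (r, x) ≤ 1 := DistFunctor.apply_le_one (g A) (r, x)
  have hg : g ∈ qLifting n ((g A).1 (r, x)) r A X {x} := mem_qLifting_singleton_iff.mpr rfl
  have hg' : g' ∉ qLifting n ((g A).1 (r, x)) r A X {x} :=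
    mem_qLifting_singleton_iff.not.mpr hne.symm
  exact ⟨(g A).1 (r, x), ⟨zero_le, hp⟩, r, A, {x}, .inl ⟨hg, hg'⟩⟩
end

section
/- Fix n : ℕ and let SA n denote the set of self-adjoint ℂ-linear endomorphisms of EuclideanSpace ℂ (Fin n). The distribution based quantum signature functor Q n : Type u ⥤ Type u, sending X to SA n → D (ℝ × X), is accessible: for every regular cardinal κ greater than the cardinality of the continuum, Q n preserves κ-filtered colimits. -/
open CategoryTheory
open scoped NNReal Classical

universe u

/-- A category `J` is `κ`-filtered if every diagram in `J` of size less than `κ`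
(indexed by a small category with fewer than `κ` arrows) admits a cocone. -/
def IsCardinalFiltered (J : Type u) [Category.{u} J] (κ : Cardinal.{u}) : Prop :=
  ∀ (A : Type u) [SmallCategory A], Cardinal.mk (Arrow A) < κ →
    ∀ (F : A ⥤ J), Nonempty (Limits.Cocone F)

/-!
Every element `x` of `Q n X` is supported on a set `S ⊆ X` of cardinality at most the continuum, in
the sense that `Q n f x` depends only on the restriction of `f` to `S`: take the second coordinates
of the finite supports of all the distributions `x A`. Any functor whose elements have supports of
cardinality `< κ` preserves a `κ`-filtered colimit `c` of sets. Indeed a set `S ⊆ c` of cardinality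
`< κ` lifts to some stage `F m`, which gives `t : c → F m` splitting the coprojection over `S`; so
an element supported on `S` is the image of its transport along `t`. If `x` and `y` at a stage `F i`
become equal over `c`, a map `F i → F m` can be taken to factor through such a `t` on the union of
their supports, and hence it already identifies `x` and `y`.
-/

open CategoryTheory.Limits ConcreteCategory

universe v w

section Cardinality

lemma hasCardinalLT_fin_arrow {X : Type u} {κ : Cardinal.{w}} (hκ : Cardinal.aleph0 ≤ κ)
    (hX : HasCardinalLT X κ) (n : ℕ) : HasCardinalLT (Fin n → X) κ := by
  induction n with
  | zero => exact hasCardinalLT_of_finite _ _ hκ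
  | succ n ih =>
    exact (hasCardinalLT_iff_of_equiv (Fin.consEquiv fun _ => X) κ).1 (hasCardinalLT_prod hκ hX ih)

lemma hasCardinalLT_of_moduleFinite (R : Type u) (M : Type v) [Semiring R] [AddCommMonoid M]
    [Module R M] [Module.Finite R M] {κ : Cardinal.{w}} (hκ : Cardinal.aleph0 ≤ κ)
    (hR : HasCardinalLT R κ) : HasCardinalLT M κ := by
  obtain ⟨n, f, hf⟩ := Module.Finite.exists_fin' R M
  exact (hasCardinalLT_fin_arrow hκ hR n).of_surjective f hf

lemma hasCardinalLT_complex {κ : Cardinal.{u}} (hκ : Cardinal.continuum < κ) :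
    HasCardinalLT ℂ κ := by
  simpa [HasCardinalLT] using hκ

lemma hasCardinalLT_SA (n : ℕ) {κ : Cardinal.{u}} (hκ : Cardinal.continuum < κ) :
    HasCardinalLT (SA n) κ :=
  (hasCardinalLT_of_moduleFinite ℂ (EuclideanSpace ℂ (Fin n) →ₗ[ℂ] EuclideanSpace ℂ (Fin n))
    (Cardinal.aleph0_le_continuum.trans hκ.le) (hasCardinalLT_complex hκ)).of_injective
    Subtype.val Subtype.val_injective

end Cardinality

section FilteredColimits

variable {κ : Cardinal.{u}} [Fact κ.IsRegular] {J : Type u} [SmallCategory J]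
  [CategoryTheory.IsCardinalFiltered J κ] {F : J ⥤ Type u} {c : Cocone F}

lemma exists_lift_of_hasCardinalLT (hc : IsColimit c) {S : Set c.pt} (hS : HasCardinalLT S κ) :
    ∃ (m : J) (s : S → F.obj m), ∀ z, c.ι.app m (s z) = z.1 := by
  have := hS.isCardinalPresentable
  let incl : ↥S ⟶ c.pt := ↾Subtype.val
  obtain ⟨m, s, hs⟩ := IsCardinalPresentable.exists_hom_of_isColimit κ hc incl
  exact ⟨m, s, congr_hom hs⟩

lemma exists_section_on_of_hasCardinalLT (hc : IsColimit c) {S : Set c.pt}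
    (hS : HasCardinalLT S κ) :
    ∃ (m : J) (t : c.pt ⟶ F.obj m), Set.EqOn (t ≫ c.ι.app m) (𝟙 c.pt) S := by
  rcases isEmpty_or_nonempty c.pt with hempty | ⟨⟨z₀⟩⟩
  · have := IsCardinalFiltered.nonempty J κ
    exact ⟨Classical.arbitrary J, ↾isEmptyElim, fun z => isEmptyElim z⟩
  have hκ : Cardinal.aleph0 ≤ κ := (Fact.out : κ.IsRegular).aleph0_le
  -- Adding a point to `S` ensures that `F.obj m` is nonempty, so that `s` extends to `c.pt`.
  obtain ⟨m, s, hs⟩ := exists_lift_of_hasCardinalLT (S := {z₀} ∪ S) hc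
    (hasCardinalLT_union hκ (hasCardinalLT_of_finite _ _ hκ) hS)
  refine ⟨m, ↾fun z => if hz : z ∈ S then s ⟨z, Or.inr hz⟩ else s ⟨z₀, Or.inl rfl⟩, fun z hz => ?_⟩
  simpa [hz] using hs ⟨z, Or.inr hz⟩

lemma exists_map_eqOn_comp_of_hasCardinalLT (hc : IsColimit c) {i : J} {S : Set (F.obj i)}
    (hS : HasCardinalLT S κ) :
    ∃ (m : J) (f : i ⟶ m) (t : c.pt ⟶ F.obj m), Set.EqOn (F.map f) (c.ι.app i ≫ t) S := by
  have himage : HasCardinalLT (c.ι.app i '' S) κ :=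
    hS.of_surjective _ (Set.surjective_mapsTo_image_restrict _ S)
  obtain ⟨m, t, ht⟩ := exists_section_on_of_hasCardinalLT hc himage
  have := hS.isCardinalPresentable
  let incl : ↥S ⟶ F.obj i := ↾Subtype.val
  have hincl : incl ≫ c.ι.app i = (incl ≫ c.ι.app i ≫ t) ≫ c.ι.app m := by
    ext z
    exact (ht ⟨z, z.2, rfl⟩).symm
  obtain ⟨k, f, g, hfg⟩ := IsCardinalPresentable.exists_eq_of_isColimit κ hc _ _ hincl
  exact ⟨k, f, t ≫ F.map g, fun z hz => congr_hom hfg ⟨z, hz⟩⟩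

end FilteredColimits

/-- `S` is a support of the element `x` of `G X`: the image of `x` under `G f` depends only on the
restriction of `f` to `S`. Supports are not unique, and no minimality is asked for. -/
def Supports (G : Type u ⥤ Type v) {X : Type u} (S : Set X) (x : G.obj X) : Prop :=
  ∀ ⦃Y : Type u⦄ ⦃f g : X ⟶ Y⦄, Set.EqOn f g S → G.map f x = G.map g x

/-- Every element of every `G X` has a support of cardinality `< κ`. This is the size condition on a
functor between categories of types from which its accessibility is deduced. -/
def HasSupportsLT (G : Type u ⥤ Type v) (κ : Cardinal.{w}) : Prop :=
  ∀ ⦃X : Type u⦄ (x : G.obj X), ∃ S : Set X, HasCardinalLT S κ ∧ Supports G S x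

section Accessibility

variable {G : Type u ⥤ Type v}

lemma Supports.mono {X : Type u} {S T : Set X} {x : G.obj X} (hS : Supports G S x) (h : S ⊆ T) :
    Supports G T x :=
  fun _ _ _ hfg => hS (hfg.mono h)

variable {κ : Cardinal.{u}} [Fact κ.IsRegular] {J : Type u} [SmallCategory J]
  [CategoryTheory.IsCardinalFiltered J κ] {F : J ⥤ Type u} {c : Cocone F}

lemma HasSupportsLT.exists_map_ι_eq (hG : HasSupportsLT G κ) (hc : IsColimit c) (x : G.obj c.pt) :
    ∃ (m : J) (y : G.obj (F.obj m)), x = G.map (c.ι.app m) y := by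
  obtain ⟨S, hScard, hS⟩ := hG x
  obtain ⟨m, t, ht⟩ := exists_section_on_of_hasCardinalLT hc hScard
  exact ⟨m, G.map t x, by simpa using (hS ht).symm⟩

lemma HasSupportsLT.exists_map_eq_of_map_ι_eq (hG : HasSupportsLT G κ) (hc : IsColimit c) {i : J}
    {x y : G.obj (F.obj i)} (hxy : G.map (c.ι.app i) x = G.map (c.ι.app i) y) :
    ∃ (m : J) (f : i ⟶ m), G.map (F.map f) x = G.map (F.map f) y := by
  obtain ⟨S, hScard, hS⟩ := hG x
  obtain ⟨T, hTcard, hT⟩ := hG y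
  obtain ⟨m, f, t, hft⟩ := exists_map_eqOn_comp_of_hasCardinalLT hc
    (hasCardinalLT_union (Fact.out : κ.IsRegular).aleph0_le hScard hTcard)
  refine ⟨m, f, ?_⟩
  calc
    G.map (F.map f) x = G.map (c.ι.app i ≫ t) x := hS.mono Set.subset_union_left hft
    _ = G.map (c.ι.app i ≫ t) y := by
      simp only [Functor.map_comp, types_comp_apply, hxy]
    _ = G.map (F.map f) y := (hT.mono Set.subset_union_right hft).symm

theorem HasSupportsLT.isCardinalAccessible (hG : HasSupportsLT G κ) :
    G.IsCardinalAccessible κ where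
  preservesColimitOfShape J _ _ := by
    have := isFiltered_of_isCardinalFiltered J κ
    exact ⟨fun {F} => ⟨fun {c} hc => ⟨Types.FilteredColimit.isColimitOf' _ _
      (hG.exists_map_ι_eq hc) fun _ _ _ => hG.exists_map_eq_of_map_ι_eq hc⟩⟩⟩

end Accessibility

section Signature

lemma supports_support_distFunctor {X : Type u} (d : DistFunctor.obj X) :
    Supports DistFunctor (d.1.support : Set X) d :=
  fun _ _ _ hfg => Subtype.ext (Finsupp.mapDomain_congr hfg)

lemma Supports.image_snd {X : Type u} {S : Set (ℝ × X)} {d : DistFunctor.obj (ℝ × X)}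
    (hS : Supports DistFunctor S d) : Supports DRFunctor (Prod.snd '' S) d :=
  fun _ _ _ hfg => hS fun p hp => Prod.ext rfl (hfg ⟨p, hp, rfl⟩)

lemma Supports.iUnion {n : ℕ} {X : Type u} {x : (QFunctor n).obj X} {S : SA n → Set X}
    (hS : ∀ A, Supports DRFunctor (S A) (x A)) : Supports (QFunctor n) (⋃ A, S A) x :=
  fun _ _ _ hfg => funext fun A => hS A (hfg.mono (Set.subset_iUnion S A))

lemma hasSupportsLT_DRFunctor {κ : Cardinal.{w}} (hκ : Cardinal.aleph0 ≤ κ) :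
    HasSupportsLT DRFunctor.{u} κ := fun X (d : DistFunctor.obj (ℝ × X)) => by
  have : Finite (Prod.snd '' (d.1.support : Set (ℝ × X))) :=
    (d.1.support.finite_toSet.image _).to_subtype
  exact ⟨_, hasCardinalLT_of_finite _ _ hκ, (supports_support_distFunctor d).image_snd⟩

lemma hasSupportsLT_QFunctor {n : ℕ} {κ : Cardinal.{w}} [Fact κ.IsRegular]
    (hn : HasCardinalLT (SA n) κ) : HasSupportsLT (QFunctor.{u} n) κ := fun X x => by
  choose S hScard hS using fun A =>
    hasSupportsLT_DRFunctor (Fact.out : κ.IsRegular).aleph0_le (x A)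
  exact ⟨⋃ A, S A, hasCardinalLT_iUnion S hn hScard, .iUnion hS⟩

end Signature

/-- The quantum signature functor `Q n` is accessible: it preserves `κ`-filtered colimits
for every regular cardinal `κ` greater than the cardinality of the continuum. -/
theorem qFunctor_accessible (n : ℕ) :
    ∀ κ : Cardinal.{u}, κ.IsRegular → Cardinal.continuum.{u} < κ →
      ∀ (J : Type u) [SmallCategory J], IsCardinalFiltered J κ →
        Limits.PreservesColimitsOfShape J (QFunctor.{u} n) := by
  intro κ hκ hc J _ hJ
  have : Fact κ.IsRegular := ⟨hκ⟩
  have : CategoryTheory.IsCardinalFiltered J κ :=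
    ⟨fun {A} _ F hA => hJ A ((hasCardinalLT_iff_cardinal_mk_lt _ _).1 hA) F⟩
  have : (QFunctor.{u} n).IsCardinalAccessible κ :=
    (hasSupportsLT_QFunctor (hasCardinalLT_SA n hc)).isCardinalAccessible
  exact (QFunctor n).preservesColimitsOfShape_of_isCardinalAccessible κ J
end
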